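/- Let A ⊆ B be an aperiodic C*-inclusion. Then A ⊆ B has the generalised intersection property: there is a closed two-sided ideal N of B such that for every closed two-sided ideal J of B one has J ∩ A = {0} if and only if J ⊆ N. Moreover, this hidden ideal N is the largest ideal of B that is aperiodic as an A-bimodule: J ⊆ N holds if and only if every x ∈ J satisfies Kishimoto's condition (for every hereditary C*-subalgebra D of A and ε > 0 there is a positive a ∈ D with ‖a‖ = 1 and ‖a x a‖ < ε). -/

import Mathlib

/-- A closed (ring-theoretic) two-sided ideal of `B`. -/
def IsClosedTwoSidedIdeal {B : Type*} [NonUnitalCStarAlgebra B] (S : Set B) : Prop :=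
  IsClosed S ∧ (0 : B) ∈ S ∧ (∀ x ∈ S, ∀ y ∈ S, x + y ∈ S) ∧ (∀ x ∈ S, -x ∈ S) ∧
    (∀ b : B, ∀ x ∈ S, b * x ∈ S) ∧ ∀ b : B, ∀ x ∈ S, x * b ∈ S

/-- A closed *-subalgebra of `B`. -/
def IsCStarSubalgebra {B : Type*} [NonUnitalCStarAlgebra B] (A : Set B) : Prop :=
  IsClosed A ∧ (0 : B) ∈ A ∧ (∀ x ∈ A, ∀ y ∈ A, x + y ∈ A) ∧
    (∀ (c : ℂ), ∀ x ∈ A, c • x ∈ A) ∧ (∀ x ∈ A, ∀ y ∈ A, x * y ∈ A) ∧ ∀ x ∈ A, star x ∈ A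

/-- A hereditary C*-subalgebra `D` of the subalgebra `A ⊆ B`: a nonzero closed
*-subalgebra of `A` such that `a ∈ D`, `b ∈ A`, `0 ≤ b ≤ a` imply `b ∈ D`. -/
def IsHereditarySubalgebraIn {B : Type*} [NonUnitalCStarAlgebra B] [PartialOrder B]
    [StarOrderedRing B] (A D : Set B) : Prop :=
  D ⊆ A ∧ IsClosed D ∧ (∃ x ∈ D, x ≠ 0) ∧ (0 : B) ∈ D ∧
    (∀ x ∈ D, ∀ y ∈ D, x + y ∈ D) ∧ (∀ (c : ℂ), ∀ x ∈ D, c • x ∈ D) ∧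
    (∀ x ∈ D, ∀ y ∈ D, x * y ∈ D) ∧ (∀ x ∈ D, star x ∈ D) ∧
    ∀ a ∈ D, ∀ b ∈ A, 0 ≤ b → b ≤ a → b ∈ D

/-- The C*-inclusion `A ⊆ B` is aperiodic: every element of `B` satisfies Kishimoto's
condition modulo `A`. -/
def IsAperiodicInclusion {B : Type*} [NonUnitalCStarAlgebra B] [PartialOrder B]
    [StarOrderedRing B] (A : Set B) : Prop :=
  ∀ x : B, ∀ D : Set B, IsHereditarySubalgebraIn A D → ∀ ε : ℝ, 0 < ε →
    ∃ a ∈ D, 0 ≤ a ∧ ‖a‖ = 1 ∧ ∃ y ∈ A, ‖a * x * a - y‖ < ε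

/-!
Let `K` be the set of elements of `B` satisfying Kishimoto's condition; the hidden ideal is the
largest two-sided ideal contained in `K`.

The set `K` is closed under addition: if `a` witnesses the condition for `x` in `D`, then `a` is
invertible on the spectral subspace of `a` where `a ≥ 1 / 2`, so on the hereditary subalgebra of `D`
that this subspace cuts out, every norm-one element is still a witness for `x`, up to a factor `4`;
a witness for `y` is then chosen inside that subalgebra.

If `J ∩ A = {0}`, the quotient map `B → B / J` is isometric on `A`, so a compression `a * x * a` of
`x ∈ J` that is close to `y ∈ A` forces `y`, hence `a * x * a`, to be small; thus `J ⊆ K`.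
Conversely a nonzero ideal of `A` contains an element acting as a unit on some hereditary subalgebra
of `A`, and such an element is not in `K`.
-/

section Ring

lemma exists_sub_mul_self_eq {R : Type*} [NonUnitalNormedRing R] [CompleteSpace R] {q : R}
    (hq : ‖q‖ < 1) (y : R) : ∃ w : R, w - w * q = y := by
  have hcontr : ContractingWith ‖q‖₊ fun w => w * q + y := by
    refine ⟨hq, LipschitzWith.of_dist_le_mul fun v w => ?_⟩
    rw [dist_add_right, dist_eq_norm, dist_eq_norm, ← sub_mul, mul_comm (‖q‖₊ : ℝ)]
    exact norm_mul_le _ _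
  exact ⟨_, sub_eq_iff_eq_add'.2 hcontr.fixedPoint_isFixedPt.symm⟩

lemma mem_of_sub_mul_mem_of_norm_lt_one {R : Type*} [NonUnitalNormedRing R] [CompleteSpace R]
    (J : TwoSidedIdeal R) {q x : R} (hq : ‖q‖ < 1) (hx : x - q * x ∈ J) : x ∈ J := by
  obtain ⟨w, hw⟩ := exists_sub_mul_self_eq hq q
  have hqx : q * x = w * (x - q * x) := by
    rw [mul_sub, ← mul_assoc, ← sub_mul, hw]
  rw [← sub_add_cancel x (q * x)]
  exact J.add_mem hx (hqx ▸ J.mul_mem_left _ _ hx)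

/-- The two-sided ideal of all `x` with `R x R ⊆ K`. In a C*-algebra, approximate units make it the
largest two-sided ideal contained in a closed subgroup `K`, see `le_twoSidedCore_iff`. -/
def twoSidedCore {R : Type*} [NonUnitalRing R] (K : AddSubgroup R) : TwoSidedIdeal R :=
  TwoSidedIdeal.mk' {x | ∀ b c, b * x * c ∈ K}
    (fun b c => by simp)
    (fun hx hy b c => by simpa only [mul_add, add_mul] using K.add_mem (hx b c) (hy b c))
    (fun hx b c => by simpa only [mul_neg, neg_mul] using K.neg_mem (hx b c))
    (fun {d _} hx b c => by simpa only [mul_assoc] using hx (b * d) c)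
    (fun {_ d} hx b c => by simpa only [mul_assoc] using hx b (d * c))

lemma mem_twoSidedCore {R : Type*} [NonUnitalRing R] {K : AddSubgroup R} {x : R} :
    x ∈ twoSidedCore K ↔ ∀ b c, b * x * c ∈ K :=
  TwoSidedIdeal.mem_mk' ..

lemma isClosed_twoSidedCore {R : Type*} [NonUnitalRing R] [TopologicalSpace R]
    [SeparatelyContinuousMul R] {K : AddSubgroup R} (hK : IsClosed (K : Set R)) :
    IsClosed (twoSidedCore K : Set R) := by
  have hcore : (twoSidedCore K : Set R) = ⋂ (b : R) (c : R), (fun x => b * x * c) ⁻¹' K := by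
    ext x
    simp only [SetLike.mem_coe, mem_twoSidedCore, Set.mem_iInter, Set.mem_preimage]
  rw [hcore]
  exact isClosed_iInter fun b => isClosed_iInter fun c =>
    hK.preimage ((continuous_mul_const c).comp (continuous_const_mul b))

lemma le_twoSidedCore_iff {R : Type*} [NonUnitalRing R] [TopologicalSpace R] {l : Filter R}
    (hl : l.IsApproximateUnit) {K : AddSubgroup R} (hK : IsClosed (K : Set R))
    {J : TwoSidedIdeal R} : J ≤ twoSidedCore K ↔ ∀ x ∈ J, x ∈ K := by
  have := hl.neBot
  refine ⟨fun hJ x hx => ?_, fun hJ x hx => ?_⟩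
  · have hleft (b : R) : b * x ∈ K :=
      hK.mem_of_tendsto (hl.tendsto_mul_left (b * x))
        (.of_forall fun c => mem_twoSidedCore.1 (hJ hx) b c)
    exact hK.mem_of_tendsto (hl.tendsto_mul_right x) (.of_forall hleft)
  · exact mem_twoSidedCore.2 fun b c =>
      hJ _ (J.mul_mem_right _ _ (J.mul_mem_left _ _ hx))

/-- The part of `D` on which `u` acts as a two-sided unit. When `u` is a multiple of `a`,
compressing by an element of it is controlled by compressing by `a`. -/
def unitCorner {R : Type*} [Mul R] (D : Set R) (u : R) : Set R :=
  {d ∈ D | u * d = d ∧ d * u = d}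

lemma norm_mul_mul_le_of_mem_unitCorner {R : Type*} [NonUnitalNormedRing R] {D : Set R}
    {a b h : R} (hah : Commute a h) (hb : b ∈ unitCorner D (a * h)) (x : R) :
    ‖b * x * b‖ ≤ (‖b‖ * ‖h‖) ^ 2 * ‖a * x * a‖ := by
  have hfactor : b * x * b = b * h * (a * x * a) * (h * b) := by
    calc b * x * b = b * (a * h) * x * (a * h * b) := by rw [hb.2.1, hb.2.2]
      _ = b * (h * a) * x * (a * h * b) := by rw [hah.eq]
      _ = b * h * (a * x * a) * (h * b) := by simp only [mul_assoc]
  calc ‖b * x * b‖ ≤ ‖b * h‖ * ‖a * x * a‖ * ‖h * b‖ := hfactor ▸ norm_mul₃_le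
    _ ≤ ‖b‖ * ‖h‖ * ‖a * x * a‖ * (‖h‖ * ‖b‖) := by gcongr <;> exact norm_mul_le _ _
    _ = (‖b‖ * ‖h‖) ^ 2 * ‖a * x * a‖ := by ring

end Ring

section Subalgebra

variable {B : Type*} [NonUnitalCStarAlgebra B]

/-- A closed two-sided ideal in the sense of `IsClosedTwoSidedIdeal`, bundled. -/
def IsClosedTwoSidedIdeal.toTwoSidedIdeal {J : Set B} (hJ : IsClosedTwoSidedIdeal J) :
    TwoSidedIdeal B :=
  TwoSidedIdeal.mk' J hJ.2.1 (hJ.2.2.1 _ · _ ·) (hJ.2.2.2.1 _) (hJ.2.2.2.2.1 _ _)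
    (hJ.2.2.2.2.2 _ _)

lemma IsClosedTwoSidedIdeal.coe_toTwoSidedIdeal {J : Set B} (hJ : IsClosedTwoSidedIdeal J) :
    (hJ.toTwoSidedIdeal : Set B) = J :=
  TwoSidedIdeal.coe_mk' ..

lemma isClosedTwoSidedIdeal_coe {J : TwoSidedIdeal B} (hJ : IsClosed (J : Set B)) :
    IsClosedTwoSidedIdeal (J : Set B) :=
  ⟨hJ, J.zero_mem, fun _ hx _ hy => J.add_mem hx hy, fun _ hx => J.neg_mem hx,
    fun b _ hx => J.mul_mem_left b _ hx, fun b _ hx => J.mul_mem_right _ b hx⟩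

/-- A closed *-subalgebra in the sense of `IsCStarSubalgebra`, bundled. -/
def IsCStarSubalgebra.toNonUnitalStarSubalgebra {A : Set B} (hA : IsCStarSubalgebra A) :
    NonUnitalStarSubalgebra ℂ B where
  carrier := A
  zero_mem' := hA.2.1
  add_mem' hx hy := hA.2.2.1 _ hx _ hy
  smul_mem' c _ hx := hA.2.2.2.1 c _ hx
  mul_mem' hx hy := hA.2.2.2.2.1 _ hx _ hy
  star_mem' hx := hA.2.2.2.2.2 _ hx

lemma IsCStarSubalgebra.cfcₙ_mem {A : Set B} (hA : IsCStarSubalgebra A) {a : B} (ha : a ∈ A)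
    (f : ℝ → ℝ) : cfcₙ f a ∈ A :=
  have : IsClosed (hA.toNonUnitalStarSubalgebra : Set B) := hA.1
  _root_.cfcₙ_mem (s := hA.toNonUnitalStarSubalgebra) f ha

lemma IsCStarSubalgebra.smul_star_mul_self_mem {A : Set B} (hA : IsCStarSubalgebra A) {x : B}
    (hx : x ∈ A) (c : ℂ) : c • star x * x ∈ A :=
  let S := hA.toNonUnitalStarSubalgebra
  S.mul_mem (S.smul_mem c (S.star_mem' hx)) hx

lemma isCStarSubalgebra_unitCorner {D : Set B} (hD : IsCStarSubalgebra D) {u : B}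
    (hu : IsSelfAdjoint u) : IsCStarSubalgebra (unitCorner D u) := by
  obtain ⟨hcl, h0, hadd, hsmul, hmul, hstar⟩ := hD
  refine ⟨?_, ⟨h0, mul_zero u, zero_mul u⟩, ?_, ?_, ?_, ?_⟩
  · exact hcl.inter ((isClosed_eq (by fun_prop) continuous_id).inter
      (isClosed_eq (by fun_prop) continuous_id))
  · rintro x ⟨hx, hux, hxu⟩ y ⟨hy, huy, hyu⟩
    exact ⟨hadd x hx y hy, by rw [mul_add, hux, huy], by rw [add_mul, hxu, hyu]⟩
  · rintro c x ⟨hx, hux, hxu⟩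
    exact ⟨hsmul c x hx, by rw [mul_smul_comm, hux], by rw [smul_mul_assoc, hxu]⟩
  · rintro x ⟨hx, hux, -⟩ y ⟨hy, -, hyu⟩
    exact ⟨hmul x hx y hy, by rw [← mul_assoc, hux], by rw [mul_assoc, hyu]⟩
  · rintro x ⟨hx, hux, hxu⟩
    exact ⟨hstar x hx, by simpa [hu.star_eq] using congr(star $hxu),
      by simpa [hu.star_eq] using congr(star $hux)⟩

end Subalgebra

section FunctionalCalculus

variable {B : Type*} [NonUnitalCStarAlgebra B]

/-- The positive part `(a - s)₊` for `0 ≤ s`, formed without a unit. For `s < 0` the function does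
not vanish at `0`, and `cfcₙ` then has a junk value. -/
noncomputable def cutDown (s : ℝ) (a : B) : B :=
  cfcₙ (fun t : ℝ => max (t - s) 0) a

/-- An inverse of `a` on the support of `cutDown s a`, by functional calculus with a function that
equals `t⁻¹` for `t ≥ s` and is bounded by `s⁻¹` everywhere. -/
noncomputable def truncatedInverse (s : ℝ) (a : B) : B :=
  cfcₙ (fun t : ℝ => t / max |t| s ^ 2) a

lemma continuous_div_max_abs_sq {s : ℝ} (hs : 0 < s) :
    Continuous fun t : ℝ => t / max |t| s ^ 2 :=
  continuous_id.div (by fun_prop) fun t => (pow_pos (hs.trans_le (le_max_right |t| s)) 2).ne'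

lemma isSelfAdjoint_truncatedInverse (s : ℝ) (a : B) : IsSelfAdjoint (truncatedInverse s a) :=
  cfcₙ_predicate _ a

lemma norm_truncatedInverse_le {s : ℝ} (hs : 0 < s) (a : B) : ‖truncatedInverse s a‖ ≤ s⁻¹ := by
  refine norm_cfcₙ_le fun t _ => ?_
  have hmax : 0 < max |t| s := hs.trans_le (le_max_right _ _)
  rw [norm_div, norm_pow, Real.norm_eq_abs, Real.norm_of_nonneg hmax.le]
  calc |t| / max |t| s ^ 2 ≤ max |t| s / max |t| s ^ 2 := by
        gcongr
        exact le_max_left _ _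
    _ = (max |t| s)⁻¹ := by field_simp
    _ ≤ s⁻¹ := by
        gcongr
        exact le_max_right _ _

lemma commute_truncatedInverse {a : B} (ha : IsSelfAdjoint a) (s : ℝ) :
    Commute a (truncatedInverse s a) := by
  simpa only [cfcₙ_id' ℝ a] using!
    cfcₙ_commute_cfcₙ (fun t : ℝ => t) (fun t => t / max |t| s ^ 2) a

lemma isSelfAdjoint_mul_truncatedInverse {a : B} (ha : IsSelfAdjoint a) (s : ℝ) :
    IsSelfAdjoint (a * truncatedInverse s a) :=
  (ha.commute_iff (isSelfAdjoint_truncatedInverse s a)).1 (commute_truncatedInverse ha s)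

lemma mul_truncatedInverse_mul_cutDown {a : B} (ha : IsSelfAdjoint a) {s : ℝ} (hs : 0 < s) :
    a * truncatedInverse s a * cutDown s a = cutDown s a := by
  have hcont := continuous_div_max_abs_sq hs
  nth_rw 1 [← cfcₙ_id' ℝ a]
  rw [truncatedInverse, cutDown,
    ← cfcₙ_mul _ _ a (by fun_prop) rfl hcont.continuousOn (zero_div _),
    ← cfcₙ_mul (fun t : ℝ => t * (t / max |t| s ^ 2)) _ a (continuous_id'.mul hcont).continuousOn
      (zero_mul _) (by fun_prop) (by simp [hs.le])]
  congr 1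
  funext t
  rcases le_total t s with hts | hst
  · rw [max_eq_right (sub_nonpos.2 hts), mul_zero]
  · have ht : 0 < t := hs.trans_le hst
    rw [abs_of_pos ht, max_eq_left hst]
    field_simp

lemma cutDown_mul_mul_truncatedInverse {a : B} (ha : IsSelfAdjoint a) {s : ℝ} (hs : 0 < s) :
    cutDown s a * (a * truncatedInverse s a) = cutDown s a := by
  have hcut : IsSelfAdjoint (cutDown s a) := cfcₙ_predicate _ a
  simpa only [star_mul, hcut.star_eq, (isSelfAdjoint_mul_truncatedInverse ha s).star_eq]
    using congr(star $(mul_truncatedInverse_mul_cutDown ha hs))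

/-- Modulo `J` the element `c` has norm less than `s`, so that `(c - s)₊` vanishes there. -/
lemma cutDown_mem_of_sub_mem (J : TwoSidedIdeal B) {c r : B} (hc : IsSelfAdjoint c)
    (hcr : c - r ∈ J) {s : ℝ} (hrs : ‖r‖ < s) : cutDown s c ∈ J := by
  have hs : 0 < s := (norm_nonneg r).trans_lt hrs
  have hnorm : ‖r * truncatedInverse s c‖ < 1 := by
    calc ‖r * truncatedInverse s c‖ ≤ ‖r‖ * ‖truncatedInverse s c‖ := norm_mul_le _ _
      _ ≤ ‖r‖ * s⁻¹ := by gcongr; exact norm_truncatedInverse_le hs c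
      _ < 1 := by rwa [← div_eq_mul_inv, div_lt_one hs]
  refine mem_of_sub_mul_mem_of_norm_lt_one J hnorm ?_
  nth_rw 1 [← mul_truncatedInverse_mul_cutDown hc hs]
  rw [← sub_mul, ← sub_mul]
  exact J.mul_mem_right _ _ (J.mul_mem_right _ _ hcr)

variable [PartialOrder B] [StarOrderedRing B]

lemma cutDown_ne_zero {a : B} (ha : 0 ≤ a) {s : ℝ} (hs : 0 ≤ s) (hsa : s < ‖a‖) :
    cutDown s a ≠ 0 := by
  obtain ⟨t, ht, hta⟩ :=
    (NonUnitalIsometricContinuousFunctionalCalculus.isGreatest_norm_quasispectrum (𝕜 := ℝ) a).1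
  have hta' : t = ‖a‖ := by
    rw [← Real.norm_of_nonneg (quasispectrum_nonneg_of_nonneg a ha t ht)]
    exact hta
  have hle : ‖max (t - s) 0‖ ≤ ‖cutDown s a‖ :=
    norm_apply_le_norm_cfcₙ (fun t : ℝ => max (t - s) 0) a ht (by fun_prop) (by simp [hs])
  rw [← norm_pos_iff]
  refine lt_of_lt_of_le ?_ hle
  rw [hta', norm_pos_iff]
  exact (lt_max_of_lt_left (sub_pos.2 hsa)).ne'

/-- An injective *-homomorphism is isometric: here for the restriction to `A` of the quotient map
by `J`, whose norm at `y` is the infimum of the `‖r‖` with `y - r ∈ J`. -/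
lemma IsCStarSubalgebra.norm_le_of_sub_mem {A : Set B} (hA : IsCStarSubalgebra A)
    {J : TwoSidedIdeal B} (hJA : (J : Set B) ∩ A = {0}) {y r : B} (hy : y ∈ A)
    (hyr : y - r ∈ J) : ‖y‖ ≤ ‖r‖ := by
  by_contra! hlt
  have hsub : star y * y - star y * r ∈ J := by
    rw [← mul_sub]
    exact J.mul_mem_left _ _ hyr
  have hnorm : ‖star y * r‖ < ‖star y * y‖ := by
    calc ‖star y * r‖ ≤ ‖y‖ * ‖r‖ := by simpa only [norm_star] using norm_mul_le (star y) r
      _ < ‖y‖ * ‖y‖ := by gcongr; exact (norm_nonneg r).trans_lt hlt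
      _ = ‖star y * y‖ := CStarRing.norm_star_mul_self.symm
  obtain ⟨s, hrs, hsy⟩ := exists_between hnorm
  have hyA : star y * y ∈ A := by simpa using hA.smul_star_mul_self_mem hy 1
  have hmem : cutDown s (star y * y) ∈ (J : Set B) ∩ A :=
    ⟨cutDown_mem_of_sub_mem J (.star_mul_self y) hsub hrs, hA.cfcₙ_mem hyA _⟩
  rw [hJA] at hmem
  exact cutDown_ne_zero (star_mul_self_nonneg y) ((norm_nonneg _).trans hrs.le) hsy hmem

end FunctionalCalculus

section Hereditary

variable {B : Type*} [NonUnitalCStarAlgebra B] [PartialOrder B] [StarOrderedRing B]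

lemma mul_eq_zero_of_nonneg_of_le {b d z : B} (hb : 0 ≤ b) (hbd : b ≤ d) (hdz : d * z = 0) :
    b * z = 0 := by
  obtain ⟨p, rfl⟩ := CStarAlgebra.nonneg_iff_eq_star_mul_self.1 hb
  have hpz : star (p * z) * (p * z) = 0 := by
    refine le_antisymm ?_ (star_mul_self_nonneg _)
    calc star (p * z) * (p * z) = star z * (star p * p) * z := by
          simp only [star_mul, mul_assoc]
      _ ≤ star z * d * z := star_left_conjugate_le_conjugate hbd z
      _ = 0 := by rw [mul_assoc, hdz, mul_zero]
  rw [mul_assoc, (CStarRing.star_mul_self_eq_zero_iff _).1 hpz, mul_zero]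

lemma mul_eq_self_of_nonneg_of_le {b d u : B} (hb : 0 ≤ b) (hbd : b ≤ d) (hdu : d * u = d) :
    b * u = b := by
  have hd : (d : Unitization ℂ B) * (1 - u) = 0 := by
    rw [mul_sub, mul_one, ← Unitization.inr_mul, hdu, sub_self]
  have hbd' : (b : Unitization ℂ B) ≤ d :=
    (Unitization.inr_le_iff b d hb.isSelfAdjoint (hb.trans hbd).isSelfAdjoint).2 hbd
  have hbu := mul_eq_zero_of_nonneg_of_le (Unitization.inr_nonneg_iff.2 hb) hbd' hd
  rw [mul_sub, mul_one, sub_eq_zero, ← Unitization.inr_mul] at hbu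
  exact (Unitization.inr_injective hbu).symm

lemma exists_smul_star_mul_self_norm_eq_one {x : B} (hx : x ≠ 0) :
    ∃ c : ℂ, 0 ≤ c • star x * x ∧ ‖c • star x * x‖ = 1 := by
  have hc : ((‖x‖⁻¹ ^ 2 : ℝ) : ℂ) • star x * x
      = star (((‖x‖⁻¹ : ℝ) : ℂ) • x) * (((‖x‖⁻¹ : ℝ) : ℂ) • x) := by
    rw [star_smul, smul_mul_smul_comm, smul_mul_assoc, Complex.star_def, Complex.conj_ofReal,
      ← Complex.ofReal_mul, sq]
  refine ⟨((‖x‖⁻¹ ^ 2 : ℝ) : ℂ), hc ▸ star_mul_self_nonneg _, ?_⟩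
  rw [hc, CStarRing.norm_star_mul_self, norm_smul, Complex.norm_real, norm_inv, norm_norm,
    inv_mul_cancel₀ (norm_ne_zero_iff.2 hx), one_mul]

lemma IsHereditarySubalgebraIn.isCStarSubalgebra {A D : Set B}
    (hD : IsHereditarySubalgebraIn A D) : IsCStarSubalgebra D := by
  obtain ⟨-, hcl, -, h0, hadd, hsmul, hmul, hstar, -⟩ := hD
  exact ⟨hcl, h0, hadd, hsmul, hmul, hstar⟩

lemma IsCStarSubalgebra.isHereditarySubalgebraIn {A D : Set B} (hD : IsCStarSubalgebra D)
    (hDA : D ⊆ A) (hD0 : ∃ x ∈ D, x ≠ 0) (hher : ∀ a ∈ D, ∀ b ∈ A, 0 ≤ b → b ≤ a → b ∈ D) :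
    IsHereditarySubalgebraIn A D := by
  obtain ⟨hcl, h0, hadd, hsmul, hmul, hstar⟩ := hD
  exact ⟨hDA, hcl, hD0, h0, hadd, hsmul, hmul, hstar, hher⟩

lemma IsHereditarySubalgebraIn.exists_nonneg_norm_eq_one {A D : Set B}
    (hD : IsHereditarySubalgebraIn A D) : ∃ a ∈ D, 0 ≤ a ∧ ‖a‖ = 1 := by
  obtain ⟨x, hxD, hx0⟩ := hD.2.2.1
  obtain ⟨c, hc⟩ := exists_smul_star_mul_self_norm_eq_one hx0
  exact ⟨_, hD.isCStarSubalgebra.smul_star_mul_self_mem hxD c, hc⟩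

lemma isHereditarySubalgebraIn_unitCorner {A D : Set B} (hD : IsHereditarySubalgebraIn A D)
    {u : B} (hu : IsSelfAdjoint u) (hne : ∃ k ∈ unitCorner D u, k ≠ 0) :
    IsHereditarySubalgebraIn A (unitCorner D u) := by
  refine (isCStarSubalgebra_unitCorner hD.isCStarSubalgebra hu).isHereditarySubalgebraIn
    (fun d hd => hD.1 hd.1) hne ?_
  rintro d ⟨hd, -, hdu⟩ b hb hb0 hbd
  have hbu : b * u = b := mul_eq_self_of_nonneg_of_le hb0 hbd hdu
  have hub : u * b = b := by
    simpa only [star_mul, hu.star_eq, hb0.isSelfAdjoint.star_eq] using congr(star $hbu)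
  obtain ⟨-, -, -, -, -, -, -, -, hher⟩ := hD
  exact ⟨hher d hd b hb hb0 hbd, hub, hbu⟩

lemma isHereditarySubalgebraIn_unitCorner_mul_truncatedInverse {A D : Set B}
    (hD : IsHereditarySubalgebraIn A D) {a : B} (haD : a ∈ D) (ha : 0 ≤ a) {s : ℝ} (hs : 0 < s)
    (hsa : s < ‖a‖) : IsHereditarySubalgebraIn A (unitCorner D (a * truncatedInverse s a)) :=
  isHereditarySubalgebraIn_unitCorner hD (isSelfAdjoint_mul_truncatedInverse ha.isSelfAdjoint s)
    ⟨cutDown s a, ⟨hD.isCStarSubalgebra.cfcₙ_mem haD _,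
      mul_truncatedInverse_mul_cutDown ha.isSelfAdjoint hs,
      cutDown_mul_mul_truncatedInverse ha.isSelfAdjoint hs⟩, cutDown_ne_zero ha hs.le hsa⟩

end Hereditary

section Kishimoto

variable {B : Type*} [NonUnitalCStarAlgebra B] [PartialOrder B] [StarOrderedRing B]

/-- Kishimoto's condition on `x : B` relative to the subalgebra `A` of `B`: every hereditary
subalgebra of `A` contains positive elements of norm one compressing `x` to arbitrarily small
norm. -/
def KishimotoCondition (A : Set B) (x : B) : Prop :=
  ∀ D : Set B, IsHereditarySubalgebraIn A D → ∀ ε : ℝ, 0 < ε →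
    ∃ a ∈ D, 0 ≤ a ∧ ‖a‖ = 1 ∧ ‖a * x * a‖ < ε

namespace KishimotoCondition

lemma zero (A : Set B) : KishimotoCondition A 0 := by
  intro D hD ε hε
  obtain ⟨a, ha, ha0, ha1⟩ := hD.exists_nonneg_norm_eq_one
  exact ⟨a, ha, ha0, ha1, by simpa using hε⟩

variable {A : Set B} {x y : B}

lemma neg (hx : KishimotoCondition A x) : KishimotoCondition A (-x) := by
  simpa only [KishimotoCondition, mul_neg, neg_mul, norm_neg] using hx

lemma add (hx : KishimotoCondition A x) (hy : KishimotoCondition A y) :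
    KishimotoCondition A (x + y) := by
  intro D hD ε hε
  obtain ⟨a, ha, ha0, ha1, hax⟩ := hx D hD (ε / 8) (by positivity)
  set h := truncatedInverse (1 / 2) a
  have hD' : IsHereditarySubalgebraIn A (unitCorner D (a * h)) :=
    isHereditarySubalgebraIn_unitCorner_mul_truncatedInverse hD ha ha0 one_half_pos
      (by rw [ha1]; exact one_half_lt_one)
  have hh : ‖h‖ ≤ 2 := (norm_truncatedInverse_le one_half_pos a).trans (by norm_num)
  obtain ⟨b, hb, hb0, hb1, hby⟩ := hy _ hD' (ε / 2) (half_pos hε)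
  have hbx : ‖b * x * b‖ ≤ ε / 2 := by
    calc ‖b * x * b‖ ≤ (‖b‖ * ‖h‖) ^ 2 * ‖a * x * a‖ :=
          norm_mul_mul_le_of_mem_unitCorner (commute_truncatedInverse ha0.isSelfAdjoint _) hb x
      _ ≤ (1 * 2) ^ 2 * (ε / 8) := by gcongr; exact hb1.le
      _ = ε / 2 := by ring
  refine ⟨b, hb.1, hb0, hb1, ?_⟩
  calc ‖b * (x + y) * b‖ ≤ ‖b * x * b‖ + ‖b * y * b‖ := by
        rw [mul_add, add_mul]
        exact norm_add_le _ _
    _ < ε := by linarith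

end KishimotoCondition

/-- The elements of `B` satisfying Kishimoto's condition relative to `A`; the hidden ideal is the
`twoSidedCore` of this subgroup. -/
def kishimotoSubgroup (A : Set B) : AddSubgroup B where
  carrier := {x | KishimotoCondition A x}
  zero_mem' := .zero A
  add_mem' := .add
  neg_mem' := .neg

lemma isClosed_kishimotoSubgroup (A : Set B) : IsClosed (kishimotoSubgroup A : Set B) := by
  refine isClosed_of_closure_subset fun x hx D hD ε hε => ?_
  obtain ⟨y, hy, hxy⟩ := Metric.mem_closure_iff.1 hx (ε / 2) (half_pos hε)
  obtain ⟨a, ha, ha0, ha1, hay⟩ := hy D hD (ε / 2) (half_pos hε)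
  refine ⟨a, ha, ha0, ha1, ?_⟩
  have hdiff : ‖a * (x - y) * a‖ ≤ ‖x - y‖ := by
    simpa only [ha1, one_mul, mul_one] using norm_mul₃_le (a := a) (b := x - y) (c := a)
  rw [dist_eq_norm] at hxy
  calc ‖a * x * a‖ = ‖a * (x - y) * a + a * y * a‖ := by rw [mul_sub, sub_mul, sub_add_cancel]
    _ ≤ ‖a * (x - y) * a‖ + ‖a * y * a‖ := norm_add_le _ _
    _ < ε := by linarith

variable {A : Set B}

lemma IsAperiodicInclusion.kishimotoCondition_of_mem (hap : IsAperiodicInclusion A)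
    (hA : IsCStarSubalgebra A) {J : TwoSidedIdeal B} (hJA : (J : Set B) ∩ A = {0}) {x : B}
    (hx : x ∈ J) : KishimotoCondition A x := by
  intro D hD ε hε
  obtain ⟨a, ha, ha0, ha1, y, hy, hay⟩ := hap x D hD (ε / 2) (half_pos hε)
  have hyJ : y - (y - a * x * a) ∈ J := by
    rw [sub_sub_cancel]
    exact J.mul_mem_right _ _ (J.mul_mem_left _ _ hx)
  have hyn : ‖y‖ ≤ ‖a * x * a - y‖ := by
    simpa only [norm_sub_rev] using hA.norm_le_of_sub_mem hJA hy hyJ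
  refine ⟨a, ha, ha0, ha1, ?_⟩
  calc ‖a * x * a‖ = ‖(a * x * a - y) + y‖ := by rw [sub_add_cancel]
    _ ≤ ‖a * x * a - y‖ + ‖y‖ := norm_add_le _ _
    _ < ε := by linarith

lemma IsHereditarySubalgebraIn.not_kishimotoCondition {u : B}
    (hu : IsHereditarySubalgebraIn A (unitCorner A u)) : ¬ KishimotoCondition A u := by
  intro hK
  obtain ⟨b, hb, hb0, hb1, hlt⟩ := hK _ hu 1 one_pos
  have hbb : ‖b * b‖ = 1 := by
    rw [hb0.isSelfAdjoint.norm_mul_self, hb1, one_pow]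
  rw [hb.2.2, hbb] at hlt
  exact lt_irrefl 1 hlt

lemma IsCStarSubalgebra.inter_eq_zero_of_kishimotoCondition (hA : IsCStarSubalgebra A)
    {J : TwoSidedIdeal B} (hJ : ∀ x ∈ J, KishimotoCondition A x) : (J : Set B) ∩ A = {0} := by
  refine Set.eq_singleton_iff_unique_mem.2 ⟨⟨J.zero_mem, hA.2.1⟩, fun x ⟨hxJ, hxA⟩ => ?_⟩
  by_contra hx0
  obtain ⟨c, ha0, ha1⟩ := exists_smul_star_mul_self_norm_eq_one hx0
  have hAA : IsHereditarySubalgebraIn A A :=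
    hA.isHereditarySubalgebraIn subset_rfl ⟨x, hxA, hx0⟩ fun _ _ _ hb _ _ => hb
  have hcorner := isHereditarySubalgebraIn_unitCorner_mul_truncatedInverse hAA
    (hA.smul_star_mul_self_mem hxA c) ha0 one_half_pos (by rw [ha1]; exact one_half_lt_one)
  exact hcorner.not_kishimotoCondition (hJ _ (J.mul_mem_right _ _ (J.mul_mem_left _ _ hxJ)))

theorem aperiodic_inclusion_generalised_intersection_property_general
    (hA : IsCStarSubalgebra A) (hap : IsAperiodicInclusion A) :
    ∃ N : TwoSidedIdeal B, IsClosed (N : Set B) ∧ ∀ J : TwoSidedIdeal B,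
      ((J : Set B) ∩ A = {0} ↔ J ≤ N) ∧ (J ≤ N ↔ ∀ x ∈ J, KishimotoCondition A x) := by
  have hK := isClosed_kishimotoSubgroup A
  have hle (J : TwoSidedIdeal B) :
      J ≤ twoSidedCore (kishimotoSubgroup A) ↔ ∀ x ∈ J, KishimotoCondition A x :=
    le_twoSidedCore_iff (CStarAlgebra.increasingApproximateUnit B).toIsApproximateUnit hK
  refine ⟨twoSidedCore (kishimotoSubgroup A), isClosed_twoSidedCore hK, fun J => ⟨?_, hle J⟩⟩
  rw [hle J]
  exact ⟨fun hJA _ hx => hap.kishimotoCondition_of_mem hA hJA hx,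
    hA.inter_eq_zero_of_kishimotoCondition⟩

end Kishimoto

/-- Every aperiodic C*-inclusion `A ⊆ B` has the generalised
intersection property: there is a closed two-sided ideal `N` (the hidden ideal) of `B`
such that a closed two-sided ideal `J` satisfies `J ∩ A = {0}` iff `J ⊆ N`; moreover `N`
is the largest ideal of `B` that is aperiodic as an `A`-bimodule, i.e. `J ⊆ N` iff every
`x ∈ J` satisfies Kishimoto's condition. -/
theorem aperiodic_inclusion_generalised_intersection_property
    {B : Type*} [NonUnitalCStarAlgebra B] [PartialOrder B] [StarOrderedRing B]
    (A : Set B) (hA : IsCStarSubalgebra A) (hA0 : ∃ x ∈ A, x ≠ 0)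
    (hap : IsAperiodicInclusion A) :
    ∃ N : Set B, IsClosedTwoSidedIdeal N ∧
      (∀ J : Set B, IsClosedTwoSidedIdeal J → (J ∩ A = {0} ↔ J ⊆ N)) ∧
      (∀ J : Set B, IsClosedTwoSidedIdeal J →
        (J ⊆ N ↔ ∀ x ∈ J, ∀ D : Set B, IsHereditarySubalgebraIn A D → ∀ ε : ℝ, 0 < ε →
          ∃ a ∈ D, 0 ≤ a ∧ ‖a‖ = 1 ∧ ‖a * x * a‖ < ε)) := by
  obtain ⟨N, hN, hJN⟩ := aperiodic_inclusion_generalised_intersection_property_general hA hap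
  refine ⟨N, isClosedTwoSidedIdeal_coe hN, fun J hJ => ?_, fun J hJ => ?_⟩
  · simpa only [hJ.coe_toTwoSidedIdeal, ← SetLike.coe_subset_coe] using
      (hJN hJ.toTwoSidedIdeal).1
  · simpa only [← SetLike.mem_coe, hJ.coe_toTwoSidedIdeal, ← SetLike.coe_subset_coe] using!
      (hJN hJ.toTwoSidedIdeal).2
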